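/- arXiv:1711.03835 — 4 statements merged into one kernel-verified Lean document; each statement's English description precedes it below -/
import Mathlib

section
/- Let ψ = |ψ⟩⟨ψ| be a bipartite pure state on ℂ^{d_A} ⊗ ℂ^{d_B} with largest Schmidt coefficient λ₁. Then the maximum of Tr(ψσ) over all separable states σ on ℂ^{d_A} ⊗ ℂ^{d_B} equals λ₁, and the maximum is attained (e.g. by the product state |1⟩⟨1| ⊗ |1⟩⟨1| in a Schmidt basis of |ψ⟩). -/
/-! The overlap of `|v⟩⟨v|` with a product state `|x⟩⟨x| ⊗ |y⟩⟨y|` is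
`|⟨v, x ⊗ y⟩|² = |∑ᵢ √λᵢ ⟨aᵢ, x⟩⟨bᵢ, y⟩|²`, where `aᵢ`, `bᵢ` are the Schmidt vectors. Since
`λᵢ ≤ λ₁`, the Cauchy–Schwarz inequality and Bessel's inequality for `a` and for `b` bound it by
`λ₁ ‖x‖² ‖y‖²` (`norm_overlap_sq_le`). A positive semidefinite matrix is a sum of rank-one
matrices `|x⟩⟨x|`, so by linearity `Tr(ψσ) ≤ λ₁ Tr σ` for every separable `σ`. Taking `x` and `y`
to be the first Schmidt vectors gives equality. -/

open Matrix BigOperators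
open scoped Kronecker ComplexOrder

noncomputable section

/-- A positive semidefinite operator on a bipartite space is separable if it is a finite
sum of Kronecker products of positive semidefinite operators. -/
def SepOp {A B : Type*} [Fintype A] [Fintype B] [DecidableEq A] [DecidableEq B]
    (X : Matrix (A × B) (A × B) ℂ) : Prop :=
  ∃ (N : ℕ) (τ : Fin N → Matrix A A ℂ) (ω : Fin N → Matrix B B ℂ),
    (∀ i, (τ i).PosSemidef) ∧ (∀ i, (ω i).PosSemidef) ∧ X = ∑ i, τ i ⊗ₖ ω i

/-- The rank-one density operator `|v⟩⟨v|` associated to a vector `v`. -/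
def pureState {n : Type*} (v : n → ℂ) : Matrix n n ℂ :=
  Matrix.of fun i j => v i * star (v j)

/-- `v` has Schmidt coefficients `lam`: it admits a Schmidt decomposition with orthonormal
local bases and coefficients `√(lam i)`. -/
def HasSchmidtCoeffs {dA dB d : ℕ} (v : Fin dA × Fin dB → ℂ) (lam : Fin d → ℝ) : Prop :=
  ∃ (a : Fin d → EuclideanSpace ℂ (Fin dA)) (b : Fin d → EuclideanSpace ℂ (Fin dB)),
    Orthonormal ℂ a ∧ Orthonormal ℂ b ∧ (∀ i, 0 ≤ lam i) ∧
    ∀ p : Fin dA × Fin dB, v p = ∑ i, (Real.sqrt (lam i) : ℂ) * a i p.1 * b i p.2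

lemma pureState_posSemidef {n : Type*} [Fintype n] (x : n → ℂ) : (pureState x).PosSemidef :=
  Matrix.posSemidef_vecMulVec_self_star x

lemma pureState_kronecker {m n : Type*} (x : m → ℂ) (y : n → ℂ) :
    pureState x ⊗ₖ pureState y = pureState fun p : m × n => x p.1 * y p.2 := by
  ext p q
  simp only [pureState, Matrix.kroneckerMap_apply, Matrix.of_apply, star_mul']
  ring

lemma trace_pureState {n : Type*} [Fintype n] (x : EuclideanSpace ℂ n) :
    (pureState fun i => x i).trace = ((‖x‖ ^ 2 : ℝ) : ℂ) := by
  rw [EuclideanSpace.norm_sq_eq]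
  simp [pureState, Matrix.trace, Complex.mul_conj']

lemma trace_pureState_mul_pureState {n : Type*} [Fintype n] (v w : n → ℂ) :
    (pureState v * pureState w).trace = ((‖∑ i, star (v i) * w i‖ ^ 2 : ℝ) : ℂ) := by
  push_cast
  rw [← Complex.mul_conj', map_sum, Finset.sum_mul_sum, Finset.sum_comm]
  simp only [pureState, Matrix.trace, Matrix.diag_apply, Matrix.mul_apply, Matrix.of_apply]
  refine Finset.sum_congr rfl fun i _ => Finset.sum_congr rfl fun j _ => ?_
  simp only [map_mul, Complex.star_def, Complex.conj_conj]
  ring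

open scoped MatrixOrder Matrix.Norms.L2Operator in
lemma exists_eq_sum_pureState {n : Type*} [Fintype n] [DecidableEq n] {τ : Matrix n n ℂ}
    (hτ : τ.PosSemidef) :
    ∃ x : n → EuclideanSpace ℂ n, τ = ∑ k, pureState fun i => x k i := by
  obtain ⟨C, rfl⟩ := CStarAlgebra.nonneg_iff_eq_star_mul_self.mp hτ.nonneg
  refine ⟨fun k => WithLp.toLp 2 fun i => star (C k i), ?_⟩
  ext i j
  simp [Matrix.star_eq_conjTranspose, Matrix.mul_apply, Matrix.sum_apply, pureState]

lemma overlap_eq {dA dB d : ℕ} {v : Fin dA × Fin dB → ℂ} {lam : Fin d → ℝ}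
    {a : Fin d → EuclideanSpace ℂ (Fin dA)} {b : Fin d → EuclideanSpace ℂ (Fin dB)}
    (hv : ∀ p : Fin dA × Fin dB, v p = ∑ i, (Real.sqrt (lam i) : ℂ) * a i p.1 * b i p.2)
    (x : EuclideanSpace ℂ (Fin dA)) (y : EuclideanSpace ℂ (Fin dB)) :
    ∑ p : Fin dA × Fin dB, star (v p) * (x p.1 * y p.2)
      = ∑ i, (Real.sqrt (lam i) : ℂ) * (inner ℂ (a i) x * inner ℂ (b i) y) := by
  simp only [hv, star_sum, Finset.sum_mul]
  rw [Finset.sum_comm]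
  refine Finset.sum_congr rfl fun i _ => ?_
  simp only [PiLp.inner_apply, RCLike.inner_apply, Fintype.sum_prod_type]
  rw [Finset.sum_mul_sum]
  simp only [Finset.mul_sum]
  refine Finset.sum_congr rfl fun α _ => Finset.sum_congr rfl fun β _ => ?_
  simp only [star_mul', Complex.star_def, Complex.conj_ofReal]
  ring

/-- The squared overlap with a product vector is at most the largest Schmidt coefficient times
the squared norms: Cauchy–Schwarz in the index `i`, then Bessel's inequality on each side. -/
lemma norm_overlap_sq_le {E F : Type*} [NormedAddCommGroup E] [InnerProductSpace ℂ E]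
    [NormedAddCommGroup F] [InnerProductSpace ℂ F] {d : ℕ} {lam : Fin d → ℝ} {l : ℝ}
    (hl0 : 0 ≤ l) (hl : ∀ i, lam i ≤ l) {a : Fin d → E} {b : Fin d → F}
    (ha : Orthonormal ℂ a) (hb : Orthonormal ℂ b) (x : E) (y : F) :
    ‖∑ i, (Real.sqrt (lam i) : ℂ) * (inner ℂ (a i) x * inner ℂ (b i) y)‖ ^ 2
      ≤ l * (‖x‖ ^ 2 * ‖y‖ ^ 2) := by
  have h1 : ‖∑ i, (Real.sqrt (lam i) : ℂ) * (inner ℂ (a i) x * inner ℂ (b i) y)‖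
      ≤ Real.sqrt l * ∑ i, ‖inner ℂ (a i) x‖ * ‖inner ℂ (b i) y‖ := by
    rw [Finset.mul_sum]
    refine (norm_sum_le _ _).trans (Finset.sum_le_sum fun i _ => ?_)
    rw [norm_mul, norm_mul, Complex.norm_real, Real.norm_of_nonneg (Real.sqrt_nonneg _)]
    gcongr
    exact hl i
  calc _ ≤ (Real.sqrt l * ∑ i, ‖inner ℂ (a i) x‖ * ‖inner ℂ (b i) y‖) ^ 2 := by gcongr
    _ = l * (∑ i, ‖inner ℂ (a i) x‖ * ‖inner ℂ (b i) y‖) ^ 2 := by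
      rw [mul_pow, Real.sq_sqrt hl0]
    _ ≤ l * ((∑ i, ‖inner ℂ (a i) x‖ ^ 2) * ∑ i, ‖inner ℂ (b i) y‖ ^ 2) := by
      gcongr
      exact Finset.sum_mul_sq_le_sq_mul_sq _ _ _
    _ ≤ l * (‖x‖ ^ 2 * ‖y‖ ^ 2) := by
      gcongr
      · exact ha.sum_inner_products_le x
      · exact hb.sum_inner_products_le y

/-- The maximum of `Tr(ψσ)` over separable states `σ` equals the largest Schmidt
coefficient `λ₁` of the pure state `ψ`, and the maximum is attained. -/
theorem stmt0 {dA dB d : ℕ} (hd : 0 < d) (v : Fin dA × Fin dB → ℂ) (lam : Fin d → ℝ)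
    (hmono : Antitone lam) (hsum : ∑ i, lam i = 1)
    (hS : HasSchmidtCoeffs v lam) :
    IsGreatest {x : ℝ | ∃ σ : Matrix (Fin dA × Fin dB) (Fin dA × Fin dB) ℂ,
      SepOp σ ∧ σ.trace = 1 ∧ (pureState v * σ).trace = (x : ℂ)} (lam ⟨0, hd⟩) := by
  obtain ⟨a, b, ha, hb, hl0, hv⟩ := hS
  have hmax : ∀ i, lam i ≤ lam ⟨0, hd⟩ := fun i => hmono (Fin.mk_le_of_le_val (Nat.zero_le _))
  -- the product of first Schmidt vectors, whose overlap with `v` is `√λ₁`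
  refine ⟨⟨pureState (fun i => a ⟨0, hd⟩ i) ⊗ₖ pureState (fun i => b ⟨0, hd⟩ i), ?_, ?_, ?_⟩, ?_⟩
  · exact ⟨1, fun _ => pureState fun i => a ⟨0, hd⟩ i, fun _ => pureState fun i => b ⟨0, hd⟩ i,
      fun _ => pureState_posSemidef _, fun _ => pureState_posSemidef _, by simp⟩
  · rw [Matrix.trace_kronecker, trace_pureState, trace_pureState, ha.1, hb.1]
    simp
  · rw [pureState_kronecker, trace_pureState_mul_pureState, overlap_eq hv,
      Finset.sum_eq_single (⟨0, hd⟩ : Fin d)]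
    · rw [inner_self_eq_norm_sq_to_K, inner_self_eq_norm_sq_to_K, ha.1, hb.1]
      simp only [RCLike.ofReal_one, one_pow, mul_one, Complex.norm_real, Real.norm_eq_abs,
        sq_abs, Real.sq_sqrt (hl0 _)]
    · intro i _ hi
      rw [ha.2 hi]
      simp
    · simp
  · rintro x ⟨σ, ⟨N, τ, ω, hτ, hω, rfl⟩, htr, hx⟩
    have key : ∀ i, (pureState v * (τ i ⊗ₖ ω i)).trace
        ≤ (lam ⟨0, hd⟩ : ℂ) * (τ i ⊗ₖ ω i).trace := by
      intro i
      obtain ⟨s, hs⟩ := exists_eq_sum_pureState (hτ i)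
      obtain ⟨t, ht⟩ := exists_eq_sum_pureState (hω i)
      have hst : τ i ⊗ₖ ω i
          = ∑ k, ∑ l, pureState (fun j => s k j) ⊗ₖ pureState (fun j => t l j) := by
        ext p q
        simp only [hs, ht, Matrix.kroneckerMap_apply, Matrix.sum_apply, Finset.sum_mul_sum]
      rw [hst]
      simp only [Matrix.trace_sum, Finset.mul_sum]
      refine Finset.sum_le_sum fun k _ => Finset.sum_le_sum fun l _ => ?_
      rw [Matrix.trace_kronecker, trace_pureState, trace_pureState, pureState_kronecker,
        trace_pureState_mul_pureState, overlap_eq hv]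
      exact_mod_cast norm_overlap_sq_le (hl0 _) hmax ha hb (s k) (t l)
    have hle : (x : ℂ) ≤ (lam ⟨0, hd⟩ : ℂ) := by
      rw [← hx, ← mul_one (lam ⟨0, hd⟩ : ℂ), ← htr]
      simp only [Matrix.trace_sum, Finset.mul_sum]
      exact Finset.sum_le_sum fun i _ => key i
    exact_mod_cast hle
end
end

section
/- Let k and d be integers with 2 ≤ k < d and let −(d+1) ≤ β ≤ d−1. For the Werner state ρ_d(β) = (1/(d² − (β+1)))(𝟙_{d²} − ((β+1)/d) F_d) on ℂ^d ⊗ ℂ^d, the operator (P ⊗ Q) ρ_d(β) (P ⊗ Q)† is separable on ℂ^k ⊗ ℂ^k for ALL k-dimensional projections P, Q : ℂ^d → ℂ^k (linear maps with P P† = 𝟙_k, Q Q† = 𝟙_k) if and only if β ≤ (d−k)/k. -/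
/-!
Write `c = (β + 1) / d`, so that `-1 ≤ c ≤ 1` and the claim is that
`(P ⊗ Q)(1 - c F_d)(P ⊗ Q)†` is always separable iff `c ≤ 1 / k`.

*Necessity.* For separable `X = ∑ τᵢ ⊗ ωᵢ` one has `tr (X F) = ∑ tr (τᵢ ωᵢ) ≥ 0`. Taking `P = Q` to
be a coordinate projection, the compression is a positive multiple of `1 - c F_k`, and
`tr ((1 - c F_k) F_k) = k - c k²`.

*Sufficiency.* With `M = P Q†`, the intertwining relation `F (A ⊗ B) = (B ⊗ A) F` gives
`(P ⊗ Q) F_d (P ⊗ Q)† = (M ⊗ M†) F_k = (M ⊗ 1) F_k (M ⊗ 1)†`. Since `M` is a contraction,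
`1 - c (M ⊗ M†) F_k` is the sum of a product term and a locally transformed Werner operator:
* if `c ≤ 0` and `s = -c ≤ 1`, it is `(1 - s M M†) ⊗ 1 + s (M ⊗ 1)(1 + F_k)(M ⊗ 1)†`;
* if `0 ≤ c ≤ 1 / k`, it is `(1 - c k M M†) ⊗ 1 + c (M ⊗ 1)(k - F_k)(M ⊗ 1)†`.

It remains to see that `1 + F_k` (`sepOp_one_add_flip`) and `k - F_k` (`sepOp_natCast_sub_flip`) are
separable. Both follow by averaging explicit product vectors over phases.
-/


open Matrix BigOperators
open scoped Kronecker ComplexOrder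

noncomputable section

/-- The flip (swap) operator `F_d = Σ_{i,j} |ij⟩⟨ji|` on `ℂ^d ⊗ ℂ^d`. -/
def flipOp (d : ℕ) : Matrix (Fin d × Fin d) (Fin d × Fin d) ℂ :=
  Matrix.of fun p q => if p.1 = q.2 ∧ p.2 = q.1 then 1 else 0

/-- The Werner state `ρ_d(β) = (𝟙 − ((β+1)/d)F_d)/(d² − (β+1))`. -/
def wernerState (d : ℕ) (β : ℝ) : Matrix (Fin d × Fin d) (Fin d × Fin d) ℂ :=
  ((((d : ℝ) ^ 2 - (β + 1))⁻¹ : ℝ) : ℂ) •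
    ((1 : Matrix (Fin d × Fin d) (Fin d × Fin d) ℂ) -
      ((((β + 1) / d : ℝ) : ℂ) • flipOp d))

namespace Werner

/-! ### The cone of separable operators -/

section cone

variable {A B : Type*} [Fintype A] [Fintype B] [DecidableEq A] [DecidableEq B]

lemma sepOp_of_fintype {ι : Type*} [Fintype ι] (τ : ι → Matrix A A ℂ) (ω : ι → Matrix B B ℂ)
    (hτ : ∀ i, (τ i).PosSemidef) (hω : ∀ i, (ω i).PosSemidef) :
    SepOp (∑ i, τ i ⊗ₖ ω i) := by
  refine ⟨Fintype.card ι, fun i => τ ((Fintype.equivFin ι).symm i),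
    fun i => ω ((Fintype.equivFin ι).symm i), fun i => hτ _, fun i => hω _, ?_⟩
  exact ((Fintype.equivFin ι).symm.sum_comp (fun i => τ i ⊗ₖ ω i)).symm

lemma sepOp_kron {τ : Matrix A A ℂ} {ω : Matrix B B ℂ} (hτ : τ.PosSemidef) (hω : ω.PosSemidef) :
    SepOp (τ ⊗ₖ ω) := by
  simpa using sepOp_of_fintype (ι := Unit) (fun _ => τ) (fun _ => ω) (fun _ => hτ) (fun _ => hω)

lemma sepOp_zero : SepOp (0 : Matrix (A × B) (A × B) ℂ) :=
  ⟨0, Fin.elim0, Fin.elim0, fun i => i.elim0, fun i => i.elim0, by simp⟩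

lemma sepOp_add {X Y : Matrix (A × B) (A × B) ℂ} (hX : SepOp X) (hY : SepOp Y) :
    SepOp (X + Y) := by
  obtain ⟨N, τ, ω, hτ, hω, rfl⟩ := hX
  obtain ⟨N', τ', ω', hτ', hω', rfl⟩ := hY
  have := sepOp_of_fintype (ι := Fin N ⊕ Fin N') (Sum.elim τ τ') (Sum.elim ω ω')
    (by rintro (i | i) <;> simp [hτ, hτ']) (by rintro (i | i) <;> simp [hω, hω'])
  simpa using this

lemma sepOp_sum {ι : Type*} (s : Finset ι) {X : ι → Matrix (A × B) (A × B) ℂ}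
    (hX : ∀ i ∈ s, SepOp (X i)) : SepOp (∑ i ∈ s, X i) :=
  Finset.sum_induction X SepOp (fun _ _ => sepOp_add) sepOp_zero hX

lemma sepOp_smul {X : Matrix (A × B) (A × B) ℂ} (hX : SepOp X) {r : ℝ} (hr : 0 ≤ r) :
    SepOp ((r : ℂ) • X) := by
  obtain ⟨N, τ, ω, hτ, hω, rfl⟩ := hX
  refine ⟨N, fun i => (r : ℂ) • τ i, ω, fun i => (hτ i).smul (by exact_mod_cast hr), hω, ?_⟩
  simp [Finset.smul_sum, Matrix.smul_kronecker]

lemma sepOp_conj {A' B' : Type*} [Fintype A'] [Fintype B'] [DecidableEq A'] [DecidableEq B']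
    {X : Matrix (A × B) (A × B) ℂ} (hX : SepOp X) (S : Matrix A' A ℂ) (T : Matrix B' B ℂ) :
    SepOp ((S ⊗ₖ T) * X * (S ⊗ₖ T)ᴴ) := by
  obtain ⟨N, τ, ω, hτ, hω, rfl⟩ := hX
  refine ⟨N, fun i => S * τ i * Sᴴ, fun i => T * ω i * Tᴴ,
    fun i => (hτ i).mul_mul_conjTranspose_same S, fun i => (hω i).mul_mul_conjTranspose_same T, ?_⟩
  simp [Matrix.mul_sum, Matrix.sum_mul, Matrix.conjTranspose_kronecker, Matrix.mul_kronecker_mul]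

end cone

/-! ### The flip operator -/

lemma flipOp_eq_sum (k : ℕ) :
    flipOp k = ∑ i : Fin k, ∑ j : Fin k,
      Matrix.single i j (1 : ℂ) ⊗ₖ Matrix.single j i (1 : ℂ) := by
  ext ⟨a, b⟩ ⟨a', b'⟩
  simp only [flipOp, Matrix.sum_apply, Matrix.kroneckerMap_apply, Matrix.single_apply,
    Matrix.of_apply]
  rw [Finset.sum_eq_single a, Finset.sum_eq_single b]
  · split_ifs <;> simp_all
  · intro j _ hj
    simp [hj]
  · simp
  · intro i _ hi
    simp [hi]
  · simp

lemma flipOp_mul_kron {d k : ℕ} (S T : Matrix (Fin d) (Fin k) ℂ) :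
    flipOp d * (S ⊗ₖ T) = (T ⊗ₖ S) * flipOp k := by
  ext ⟨a, b⟩ ⟨a', b'⟩
  simp only [flipOp, Matrix.mul_apply, Fintype.sum_prod_type, Matrix.kroneckerMap_apply,
    Matrix.of_apply, ite_mul, mul_ite, one_mul, zero_mul, mul_one, mul_zero, ite_and]
  simp [mul_comm]

lemma kron_mul_flipOp_mul {d k : ℕ} (P Q : Matrix (Fin k) (Fin d) ℂ) :
    (P ⊗ₖ Q) * flipOp d * (P ⊗ₖ Q)ᴴ = ((P * Qᴴ) ⊗ₖ (P * Qᴴ)ᴴ) * flipOp k := by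
  rw [Matrix.conjTranspose_kronecker, Matrix.mul_assoc, flipOp_mul_kron, ← Matrix.mul_assoc,
    ← Matrix.mul_kronecker_mul, Matrix.conjTranspose_mul, Matrix.conjTranspose_conjTranspose]

lemma trace_kron_mul_flipOp {k : ℕ} (S T : Matrix (Fin k) (Fin k) ℂ) :
    ((S ⊗ₖ T) * flipOp k).trace = (S * T).trace := by
  simp only [flipOp, Matrix.trace, Matrix.diag_apply, Matrix.mul_apply, Fintype.sum_prod_type,
    Matrix.kroneckerMap_apply, Matrix.of_apply, mul_ite, mul_one, mul_zero, ite_and]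
  simp

lemma flipOp_mul_self (k : ℕ) : flipOp k * flipOp k = 1 := by
  ext ⟨a, b⟩ ⟨a', b'⟩
  simp only [flipOp, Matrix.mul_apply, Fintype.sum_prod_type, Matrix.of_apply, mul_ite, mul_one,
    mul_zero, ite_and, Matrix.one_apply, Prod.mk.injEq]
  simp

/-- The flip is an entanglement witness up to sign: its trace against a separable operator is
nonnegative. -/
lemma trace_mul_flipOp_nonneg {k : ℕ} {X : Matrix (Fin k × Fin k) (Fin k × Fin k) ℂ}
    (hX : SepOp X) : 0 ≤ (X * flipOp k).trace := by
  obtain ⟨N, τ, ω, hτ, hω, rfl⟩ := hX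
  rw [Matrix.sum_mul, Matrix.trace_sum]
  refine Finset.sum_nonneg fun i _ => ?_
  rw [trace_kron_mul_flipOp]
  obtain ⟨m, v, hv⟩ := Matrix.posSemidef_iff_eq_sum_vecMulVec.1 (hτ i)
  rw [hv, Matrix.sum_mul, Matrix.trace_sum]
  refine Finset.sum_nonneg fun l _ => ?_
  rw [Matrix.trace_mul_comm, Matrix.mul_vecMulVec, Matrix.trace_vecMulVec, dotProduct_comm]
  exact (hω i).dotProduct_mulVec_nonneg _

/-! ### Separability of `k - F` -/

lemma posSemidef_single {k : ℕ} (i : Fin k) : (Matrix.single i i (1 : ℂ)).PosSemidef := by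
  have := Matrix.posSemidef_vecMulVec_self_star (Pi.single i (1 : ℂ))
  convert this using 1
  ext a b
  simp only [Matrix.single_apply, Matrix.vecMulVec_apply, Pi.single_apply, Pi.star_apply]
  by_cases ha : a = i <;> by_cases hb : b = i <;> simp [ha, hb, eq_comm (a := i)]

/-- The two-level building block. It is the average over `z ∈ {1, -1, i, -i}` of the product
states of `eᵢ + z eⱼ` and `eᵢ - z eⱼ`. -/
lemma sepOp_pair {k : ℕ} (i j : Fin k) :
    SepOp ((Matrix.single i i (1 : ℂ) + Matrix.single j j 1) ⊗ₖ
        (Matrix.single i i (1 : ℂ) + Matrix.single j j 1)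
      - Matrix.single i j (1 : ℂ) ⊗ₖ Matrix.single j i (1 : ℂ)
      - Matrix.single j i (1 : ℂ) ⊗ₖ Matrix.single i j (1 : ℂ)) := by
  -- For `|z| = 1` this is the rank-one operator of the vector `eᵢ + z eⱼ`.
  let u : ℂ → Matrix (Fin k) (Fin k) ℂ := fun z =>
    Matrix.single i i 1 + Matrix.single j j 1 + z • Matrix.single j i 1
      + star z • Matrix.single i j 1
  have hu : ∀ z : ℂ, z * star z = 1 → (u z).PosSemidef := by
    intro z hz
    have := Matrix.posSemidef_self_mul_conjTranspose
      (Matrix.single i i (1 : ℂ) + z • Matrix.single j i 1)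
    convert this using 1
    rw [mul_comm] at hz
    simp only [u, Matrix.conjTranspose_add, Matrix.conjTranspose_smul, Matrix.conjTranspose_single,
      Matrix.mul_add, Matrix.add_mul, Matrix.smul_mul, Matrix.mul_smul,
      Matrix.single_mul_single_same, star_one, mul_one, smul_add]
    rw [smul_smul, hz, one_smul]
    abel
  have key := sepOp_smul (r := 1 / 4) (sepOp_add (sepOp_add
    (sepOp_kron (hu 1 (by simp)) (hu (-1) (by simp)))
    (sepOp_kron (hu (-1) (by simp)) (hu 1 (by simp)))) (sepOp_add
    (sepOp_kron (hu Complex.I (by simp)) (hu (-Complex.I) (by simp)))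
    (sepOp_kron (hu (-Complex.I) (by simp)) (hu Complex.I (by simp))))) (by norm_num)
  convert key using 1
  ext ⟨a, b⟩ ⟨a', b'⟩
  simp only [u, Matrix.smul_apply, Matrix.add_apply, Matrix.sub_apply, Matrix.kroneckerMap_apply,
    smul_eq_mul]
  generalize Matrix.single i i (1 : ℂ) a a' = x₁
  generalize Matrix.single j j (1 : ℂ) a a' = x₂
  generalize Matrix.single i j (1 : ℂ) a a' = x₃
  generalize Matrix.single j i (1 : ℂ) a a' = x₄
  simp
  ring_nf
  simp
  ring

lemma sum_single_diag (k : ℕ) : ∑ i : Fin k, Matrix.single i i (1 : ℂ) = 1 := by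
  ext a b
  simp only [Matrix.sum_apply, Matrix.single_apply, Matrix.one_apply, ite_and]
  simp

lemma sum_kron_sum {k : ℕ} (S T : Fin k → Matrix (Fin k) (Fin k) ℂ) :
    ∑ i, ∑ j, S i ⊗ₖ T j = (∑ i, S i) ⊗ₖ (∑ j, T j) := by
  ext ⟨a, b⟩ ⟨a', b'⟩
  simp [Matrix.sum_apply, Matrix.kroneckerMap_apply, Finset.sum_mul_sum]

lemma sepOp_natCast_sub_flip (k : ℕ) (hk : 1 ≤ k) :
    SepOp ((k : ℂ) • (1 : Matrix (Fin k × Fin k) (Fin k × Fin k) ℂ) - flipOp k) := by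
  have h1 := sepOp_smul (r := 1 / 2)
    (sepOp_sum Finset.univ fun i _ =>
      sepOp_sum (Finset.univ.erase i) fun j _ => sepOp_pair (k := k) i j) (by norm_num)
  have h2 := sepOp_smul (r := (k : ℝ) - 1)
    (sepOp_sum Finset.univ fun i _ => sepOp_sum (Finset.univ.erase i) fun j _ =>
      sepOp_kron (posSemidef_single (k := k) i) (posSemidef_single j)) (by simpa using hk)
  convert sepOp_add h1 h2 using 1
  have e1 : ∑ i : Fin k, ∑ j : Fin k, Matrix.single i i (1 : ℂ) ⊗ₖ Matrix.single j j (1 : ℂ) = 1 := by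
    rw [← Matrix.one_kronecker_one, ← sum_single_diag, sum_kron_sum]
  have e2 : ∑ i : Fin k, ∑ j : Fin k, Matrix.single j j (1 : ℂ) ⊗ₖ Matrix.single i i (1 : ℂ) = 1 := by
    rw [Finset.sum_comm, e1]
  have e3 := flipOp_eq_sum k
  have e4 : flipOp k = ∑ i : Fin k, ∑ j : Fin k,
      Matrix.single j i (1 : ℂ) ⊗ₖ Matrix.single i j (1 : ℂ) := by
    rw [Finset.sum_comm, e3]
  simp only [Finset.sum_erase_eq_sub (Finset.mem_univ _), Finset.sum_sub_distrib,
    Matrix.add_kronecker, Matrix.kronecker_add, Finset.sum_add_distrib, ← e3, ← e4, e1, e2,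
    Finset.sum_const, Finset.card_univ, Fintype.card_fin, ← Finset.smul_sum]
  simp only [← Nat.cast_smul_eq_nsmul ℂ]
  push_cast
  module

/-! ### Separability of `1 + F` -/

instance fintypePhases : Fintype (rootsOfUnity 3 ℂ) := Fintype.ofFinite _

/-- The fourth moment of independent uniform cube roots of unity `g₁, …, g_k`, up to
normalisation: `E[gᵢ gⱼ ḡₐ ḡ_b]` is `1` if `{i, j} = {a, b}` as multisets and `0` otherwise. -/
lemma sum_phases {k : ℕ} (i j a b : Fin k) :
    ∑ g : Fin k → rootsOfUnity 3 ℂ,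
      (((g i : ℂˣ) : ℂ) * star ((g a : ℂˣ) : ℂ)) * (((g j : ℂˣ) : ℂ) * star ((g b : ℂˣ) : ℂ)) =
    if (i = a ∧ j = b) ∨ (i = b ∧ j = a) then
      (Fintype.card (Fin k → rootsOfUnity 3 ℂ) : ℂ) else 0 := by
  have hnorm : ∀ z : rootsOfUnity 3 ℂ, ((z : ℂˣ) : ℂ) * star ((z : ℂˣ) : ℂ) = 1 := by
    intro z
    have := Complex.norm_eq_one_of_mem_rootsOfUnity z.2
    simp [Complex.mul_conj, Complex.normSq_eq_norm_sq, this]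
  split_ifs with h
  · rw [Finset.sum_congr rfl (g := fun _ => 1)]
    · simp
    · intro g _
      rcases h with ⟨rfl, rfl⟩ | ⟨rfl, rfl⟩
      · simp only [hnorm, mul_one]
      · linear_combination (((g j : ℂˣ) : ℂ) * star ((g j : ℂˣ) : ℂ)) * hnorm (g i) + hnorm (g j)
  · have hprim := Complex.isPrimitiveRoot_exp 3 (by norm_num)
    obtain ⟨ζ, hζ⟩ : ∃ ζ : rootsOfUnity 3 ℂ, IsPrimitiveRoot ((ζ : ℂˣ) : ℂ) 3 :=
      ⟨hprim.toRootsOfUnity, by simpa using hprim⟩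
    have hζ1 : ((ζ : ℂˣ) : ℂ) ≠ 1 := hζ.ne_one (by norm_num)
    have hζ2 : ((ζ : ℂˣ) : ℂ) * ((ζ : ℂˣ) : ℂ) ≠ 1 := by
      rw [← sq]; exact hζ.pow_ne_one_of_pos_of_lt (by norm_num) (by norm_num)
    have hζs := hnorm ζ
    -- Translating the summation variable by `g` multiplies the sum by the monomial at `g`.
    have hinv : ∀ g : Fin k → rootsOfUnity 3 ℂ,
        (((g i : ℂˣ) : ℂ) * star ((g a : ℂˣ) : ℂ)) *
          (((g j : ℂˣ) : ℂ) * star ((g b : ℂˣ) : ℂ)) ≠ 1 →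
        ∑ g : Fin k → rootsOfUnity 3 ℂ, (((g i : ℂˣ) : ℂ) * star ((g a : ℂˣ) : ℂ)) *
          (((g j : ℂˣ) : ℂ) * star ((g b : ℂˣ) : ℂ)) = 0 := by
      intro g hg
      have hsum := Equiv.sum_comp (Equiv.mulLeft g) (fun g : Fin k → rootsOfUnity 3 ℂ =>
        (((g i : ℂˣ) : ℂ) * star ((g a : ℂˣ) : ℂ)) * (((g j : ℂˣ) : ℂ) * star ((g b : ℂˣ) : ℂ)))
      refine (mul_eq_zero.1 ?_).resolve_left (sub_ne_zero.2 hg)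
      rw [sub_mul, one_mul, sub_eq_zero, Finset.mul_sum]
      refine Eq.trans (Finset.sum_congr rfl fun x _ => ?_) hsum
      simp only [Equiv.coe_mulLeft, Pi.mul_apply, Subgroup.coe_mul, Units.val_mul, star_mul']
      ring
    -- It suffices to change one phase `l` occurring in `i, j` more often than in `a, b`.
    by_cases hi : i = a ∨ i = b
    · apply hinv (Pi.mulSingle j ζ)
      rcases hi with rfl | rfl
      · have hb : b ≠ j := fun e => h (Or.inl ⟨rfl, e.symm⟩)
        rw [hnorm]
        simpa [Pi.mulSingle_apply, hb] using hζ1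
      · have ha : a ≠ j := fun e => h (Or.inr ⟨rfl, e.symm⟩)
        rw [mul_mul_mul_comm, mul_comm (star _), ← mul_mul_mul_comm, hnorm]
        simpa [Pi.mulSingle_apply, ha] using hζ1
    · push Not at hi
      apply hinv (Pi.mulSingle i ζ)
      by_cases hj : j = i
      · simpa [Pi.mulSingle_apply, hj, hi.1.symm, hi.2.symm] using hζ2
      · simpa [Pi.mulSingle_apply, hj, hi.1.symm, hi.2.symm] using hζ1

/-- `1 + F` is the average of `gg† ⊗ gg†` over phase vectors `g`, plus `∑ᵢ |ii⟩⟨ii|`. -/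
lemma sepOp_one_add_flip (k : ℕ) :
    SepOp ((1 : Matrix (Fin k × Fin k) (Fin k × Fin k) ℂ) + flipOp k) := by
  have hv : ∀ g : Fin k → rootsOfUnity 3 ℂ,
      (Matrix.vecMulVec (fun i => ((g i : ℂˣ) : ℂ)) (star fun i => ((g i : ℂˣ) : ℂ))).PosSemidef :=
    fun g => Matrix.posSemidef_vecMulVec_self_star _
  have h := sepOp_add
    (sepOp_smul (r := (Fintype.card (Fin k → rootsOfUnity 3 ℂ) : ℝ)⁻¹)
      (sepOp_of_fintype _ _ hv hv) (by positivity))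
    (sepOp_of_fintype _ _ (posSemidef_single (k := k)) posSemidef_single)
  convert h using 1
  have hcard : (Fintype.card (Fin k → rootsOfUnity 3 ℂ) : ℂ) ≠ 0 :=
    Nat.cast_ne_zero.2 Fintype.card_ne_zero
  ext ⟨i, j⟩ ⟨a, b⟩
  simp only [Matrix.add_apply, Matrix.smul_apply, Matrix.sum_apply, Matrix.kroneckerMap_apply,
    Matrix.vecMulVec_apply, Pi.star_apply, sum_phases, flipOp, Matrix.of_apply, Matrix.one_apply,
    Prod.mk.injEq, smul_eq_mul]
  have hd : ∑ x : Fin k, Matrix.single x x (1 : ℂ) i a * Matrix.single x x (1 : ℂ) j b =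
      if i = a ∧ j = b ∧ i = j then 1 else 0 := by
    rw [Finset.sum_eq_single i]
    · simp only [Matrix.single_apply, ← ite_and, mul_ite, mul_one, mul_zero]
      congr 1; simp; grind
    · intro x _ hx
      simp [Matrix.single_apply, hx]
    · simp
  rw [hd]
  push_cast
  split_ifs <;> grind

/-! ### Compressions -/

lemma posSemidef_one_sub_smul {k d : ℕ} {P Q : Matrix (Fin k) (Fin d) ℂ}
    (hP : P * Pᴴ = 1) (hQ : Q * Qᴴ = 1) {t : ℝ} (ht0 : 0 ≤ t) (ht1 : t ≤ 1) :
    ((1 : Matrix (Fin k) (Fin k) ℂ) - (t : ℂ) • ((P * Qᴴ) * (P * Qᴴ)ᴴ)).PosSemidef := by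
  have h1 : ((1 : Matrix (Fin k) (Fin k) ℂ) - (P * Qᴴ) * (P * Qᴴ)ᴴ).PosSemidef := by
    -- `1 - M M† = R R†` for `R = P (1 - Q†Q)`, as `1 - Q†Q` is an orthogonal projection.
    have := Matrix.posSemidef_self_mul_conjTranspose (P * (1 - Qᴴ * Q))
    convert this using 1
    have h : (1 - Qᴴ * Q) * (1 - Qᴴ * Q) = 1 - Qᴴ * Q := by
      have : Qᴴ * Q * (Qᴴ * Q) = Qᴴ * Q := by
        rw [Matrix.mul_assoc, ← Matrix.mul_assoc Q, hQ, Matrix.one_mul]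
      rw [Matrix.mul_sub, Matrix.sub_mul, Matrix.sub_mul, this]
      simp
    simp only [Matrix.conjTranspose_mul, Matrix.conjTranspose_sub,
      Matrix.conjTranspose_conjTranspose, Matrix.conjTranspose_one]
    rw [Matrix.mul_assoc P (1 - _), ← Matrix.mul_assoc (1 - Qᴴ * Q) _ Pᴴ, h, Matrix.sub_mul, Matrix.mul_sub,
      Matrix.one_mul, hP]
    simp only [Matrix.mul_assoc]
  have h2 : ((1 : Matrix (Fin k) (Fin k) ℂ)).PosSemidef := Matrix.PosSemidef.one
  have h3 := (h2.smul (a := ((1 - t : ℝ) : ℂ)) (by exact_mod_cast sub_nonneg.2 ht1)).add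
    (h1.smul (a := (t : ℂ)) (by exact_mod_cast ht0))
  convert h3 using 1
  push_cast
  module

/-- The compression of `1 - c F` for `-1 ≤ c ≤ 1 / k`. -/
lemma sepOp_one_sub_smul {k d : ℕ} (hk : 1 ≤ k) {P Q : Matrix (Fin k) (Fin d) ℂ}
    (hP : P * Pᴴ = 1) (hQ : Q * Qᴴ = 1) {c : ℝ} (hc0 : -1 ≤ c) (hc1 : c * k ≤ 1) :
    SepOp (1 - (c : ℂ) • ((P ⊗ₖ Q) * flipOp d * (P ⊗ₖ Q)ᴴ)) := by
  set M := P * Qᴴ with hM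
  have hF : (P ⊗ₖ Q) * flipOp d * (P ⊗ₖ Q)ᴴ =
      (M ⊗ₖ (1 : Matrix (Fin k) (Fin k) ℂ)) * flipOp k * (M ⊗ₖ 1)ᴴ := by
    rw [kron_mul_flipOp_mul, kron_mul_flipOp_mul]
    simp [hM]
  have hone : (M ⊗ₖ (1 : Matrix (Fin k) (Fin k) ℂ)) * (M ⊗ₖ 1)ᴴ = (M * Mᴴ) ⊗ₖ 1 := by
    rw [Matrix.conjTranspose_kronecker, ← Matrix.mul_kronecker_mul]
    simp
  rw [hF]
  rcases le_total c 0 with hc | hc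
  · have h := sepOp_add
      (sepOp_kron (posSemidef_one_sub_smul hP hQ (t := -c) (by linarith) (by linarith))
        (Matrix.PosSemidef.one (n := Fin k) (R := ℂ)))
      (sepOp_smul (sepOp_conj (sepOp_one_add_flip k) M 1) (r := -c) (by linarith))
    convert h using 1
    rw [← hM, Matrix.mul_add, Matrix.add_mul, Matrix.mul_one, hone, sub_eq_add_neg 1 ((_ : ℂ) • (M * Mᴴ)),
      Matrix.add_kronecker, ← neg_smul, Matrix.smul_kronecker, Matrix.one_kronecker_one]
    push_cast
    module
  · have h := sepOp_add
      (sepOp_kron (posSemidef_one_sub_smul hP hQ (t := c * k) (by positivity) hc1)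
        (Matrix.PosSemidef.one (n := Fin k) (R := ℂ)))
      (sepOp_smul (sepOp_conj (sepOp_natCast_sub_flip k hk) M 1) (r := c) hc)
    convert h using 1
    rw [← hM, Matrix.mul_sub, Matrix.sub_mul, Matrix.mul_smul, Matrix.smul_mul, Matrix.mul_one,
      hone, sub_eq_add_neg 1 ((_ : ℂ) • (M * Mᴴ)),
      Matrix.add_kronecker, ← neg_smul, Matrix.smul_kronecker, Matrix.one_kronecker_one]
    push_cast
    module

lemma compression_eq {k d : ℕ} {P Q : Matrix (Fin k) (Fin d) ℂ}
    (hP : P * Pᴴ = 1) (hQ : Q * Qᴴ = 1) (β : ℝ) :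
    (P ⊗ₖ Q) * wernerState d β * (P ⊗ₖ Q)ᴴ = ((((d : ℝ) ^ 2 - (β + 1))⁻¹ : ℝ) : ℂ) •
      (1 - (((β + 1) / d : ℝ) : ℂ) • ((P ⊗ₖ Q) * flipOp d * (P ⊗ₖ Q)ᴴ)) := by
  have h1 : (P ⊗ₖ Q) * (P ⊗ₖ Q)ᴴ = 1 := by
    rw [Matrix.conjTranspose_kronecker, ← Matrix.mul_kronecker_mul, hP, hQ,
      Matrix.one_kronecker_one]
  rw [wernerState, Matrix.mul_smul, Matrix.smul_mul, Matrix.mul_sub, Matrix.sub_mul,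
    Matrix.mul_one, h1, Matrix.mul_smul, Matrix.smul_mul]

end Werner

open Werner in
/-- For `2 ≤ k < d` and `−(d+1) ≤ β ≤ d−1`: the compression
`(P ⊗ Q) ρ_d(β) (P ⊗ Q)†` is separable for all `k`-dimensional projections `P, Q`
iff `β ≤ (d−k)/k`. -/
theorem stmt16 (k d : ℕ) (hk : 2 ≤ k) (hkd : k < d) (β : ℝ)
    (hβ₁ : -((d : ℝ) + 1) ≤ β) (hβ₂ : β ≤ (d : ℝ) - 1) :
    (∀ P Q : Matrix (Fin k) (Fin d) ℂ,
      P * Pᴴ = 1 → Q * Qᴴ = 1 →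
      SepOp ((P ⊗ₖ Q) * wernerState d β * (P ⊗ₖ Q)ᴴ))
    ↔ β ≤ ((d : ℝ) - k) / k := by
  have hk0 : (0 : ℝ) < k := by exact_mod_cast (by omega : 0 < k)
  have hd2 : (2 : ℝ) < d := by exact_mod_cast (by omega : 2 < d)
  have hd0 : (0 : ℝ) < d := by linarith
  have hN : 0 < (d : ℝ) ^ 2 - (β + 1) := by nlinarith
  have hiff : β ≤ ((d : ℝ) - k) / k ↔ (β + 1) / d * k ≤ 1 := by
    rw [le_div_iff₀ hk0, div_mul_eq_mul_div, div_le_one hd0]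
    constructor <;> intro h <;> linarith
  rw [hiff]
  constructor
  · intro h
    -- The coordinate projection onto the first `k` basis vectors.
    let P : Matrix (Fin k) (Fin d) ℂ := (1 : Matrix (Fin d) (Fin d) ℂ).submatrix
      (Fin.castLE hkd.le) id
    have hP : P * Pᴴ = 1 := by
      ext a b
      simp [P, Matrix.mul_apply, Matrix.one_apply, apply_ite, Fin.castLE_inj, eq_comm]
    have hs := sepOp_smul (h P P hP hP) hN.le
    rw [compression_eq hP hP, smul_smul, ← Complex.ofReal_mul, mul_inv_cancel₀ hN.ne',
      Complex.ofReal_one, one_smul, kron_mul_flipOp_mul, hP, Matrix.conjTranspose_one,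
      Matrix.one_kronecker_one, Matrix.one_mul] at hs
    have ht := trace_mul_flipOp_nonneg hs
    have h1 : (flipOp k).trace = k := by
      have := trace_kron_mul_flipOp (1 : Matrix (Fin k) (Fin k) ℂ) 1
      simpa using this
    rw [Matrix.sub_mul, Matrix.smul_mul, flipOp_mul_self, Matrix.one_mul, Matrix.trace_sub,
      Matrix.trace_smul, Matrix.trace_one, h1] at ht
    have ht' : (0 : ℝ) ≤ k - (β + 1) / d * (k * k) := by
      have : (0 : ℂ) ≤ ((k - (β + 1) / d * (k * k) : ℝ) : ℂ) := by
        convert ht using 1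
        simp
      exact_mod_cast this
    have : 0 ≤ (k : ℝ) * (1 - (β + 1) / d * k) := by linarith
    linarith [nonneg_of_mul_nonneg_right this hk0]
  · intro hc P Q hP hQ
    rw [compression_eq hP hQ]
    refine sepOp_smul (sepOp_one_sub_smul (by omega) hP hQ ?_ hc) (inv_nonneg.2 hN.le)
    rw [le_div_iff₀ hd0]
    linarith
end
end

section
/- For all real numbers x, y > 0 with x ≠ y and all r ∈ (−1, 0) ∪ (0, 1), it holds that (1/r)·(x^r − y^r)/(x − y) ≤ (xy)^{(r−1)/2}. -/
/-!
Write `x = e^(a+t)` and `y = e^(a-t)`. Then `x^r - y^r = 2 e^(ra) sinh (rt)`,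
`x - y = 2 e^a sinh t` and `(xy)^((r-1)/2) = e^((r-1)a)`, so the claim becomes
`sinh (rt) / (r sinh t) ≤ 1`. This quotient is even in `r` and in `t`, and for `r, t ≥ 0` the
bound `sinh (rt) ≤ r sinh t` holds because `r sinh t - sinh (rt)` vanishes at `t = 0` and has
derivative `r (cosh t - cosh (rt)) ≥ 0`.
-/

theorem sinh_mul_le_mul_sinh {s t : ℝ} (hs : 0 ≤ s) (hs1 : s ≤ 1) (ht : 0 ≤ t) :
    Real.sinh (s * t) ≤ s * Real.sinh t := by
  have hd : ∀ u : ℝ, HasDerivAt (fun u => s * Real.sinh u - Real.sinh (s * u))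
      (s * Real.cosh u - Real.cosh (s * u) * (s * 1)) u := fun u =>
    ((Real.hasDerivAt_sinh u).const_mul s).sub (((hasDerivAt_id u).const_mul s).sinh)
  have hm : Monotone (fun u => s * Real.sinh u - Real.sinh (s * u)) := by
    apply monotone_of_deriv_nonneg (fun u => (hd u).differentiableAt)
    intro u
    rw [(hd u).deriv]
    have hc : Real.cosh (s * u) ≤ Real.cosh u := by
      rw [Real.cosh_le_cosh, abs_mul, abs_of_nonneg hs]
      exact mul_le_of_le_one_left (abs_nonneg u) hs1
    nlinarith [mul_le_mul_of_nonneg_left hc hs]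
  have h := hm ht
  simp only [mul_zero, Real.sinh_zero, sub_zero] at h
  linarith

theorem sinh_mul_div_le_one {r : ℝ} (hr : |r| ≤ 1) (t : ℝ) :
    Real.sinh (r * t) / (r * Real.sinh t) ≤ 1 := by
  refine (le_abs_self _).trans ?_
  rw [abs_div, abs_mul, Real.abs_sinh, Real.abs_sinh, abs_mul]
  exact div_le_one_of_le₀ (sinh_mul_le_mul_sinh (abs_nonneg r) hr (abs_nonneg t))
    (mul_nonneg (abs_nonneg r) (Real.sinh_nonneg_iff.2 (abs_nonneg t)))

/-- For all `x, y > 0` with `x ≠ y` and `r ∈ (−1,0) ∪ (0,1)`: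
`(1/r)·(x^r − y^r)/(x − y) ≤ (xy)^{(r−1)/2}`. -/
theorem stmt18 (x y r : ℝ) (hx : 0 < x) (hy : 0 < y) (hxy : x ≠ y)
    (hr : r ∈ Set.Ioo (-1 : ℝ) 0 ∪ Set.Ioo (0 : ℝ) 1) :
    (1 / r) * ((x ^ r - y ^ r) / (x - y)) ≤ (x * y) ^ ((r - 1) / 2) := by
  have hr1 : |r| ≤ 1 := by
    rw [abs_le]
    rcases hr with h | h <;> constructor <;> linarith [h.1, h.2]
  obtain ⟨a, t, rfl, rfl⟩ : ∃ a t : ℝ, x = Real.exp (a + t) ∧ y = Real.exp (a - t) := by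
    refine ⟨(Real.log x + Real.log y) / 2, (Real.log x - Real.log y) / 2, ?_, ?_⟩
    · ring_nf
      exact (Real.exp_log hx).symm
    · ring_nf
      exact (Real.exp_log hy).symm
  have key : ∀ b u : ℝ, Real.exp (b + u) - Real.exp (b - u) = 2 * Real.exp b * Real.sinh u := by
    intro b u
    rw [Real.sinh_eq, sub_eq_add_neg b u, Real.exp_add, Real.exp_add]
    ring
  have h1 : Real.exp (a + t) ^ r - Real.exp (a - t) ^ r
      = 2 * Real.exp (r * a) * Real.sinh (r * t) := by
    rw [← key, ← Real.exp_mul, ← Real.exp_mul]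
    ring_nf
  have h2 : (Real.exp (a + t) * Real.exp (a - t)) ^ ((r - 1) / 2)
      = Real.exp (r * a) / Real.exp a := by
    rw [← Real.exp_add, ← Real.exp_mul, ← Real.exp_sub]
    ring_nf
  rw [h1, h2, key]
  calc 1 / r * (2 * Real.exp (r * a) * Real.sinh (r * t) / (2 * Real.exp a * Real.sinh t))
      = Real.exp (r * a) / Real.exp a * (Real.sinh (r * t) / (r * Real.sinh t)) := by
        rw [mul_assoc 2, mul_assoc 2, mul_div_mul_left _ _ two_ne_zero, mul_div_mul_comm,
          div_mul_eq_div_mul_one_div (Real.sinh (r * t))]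
        ring
    _ ≤ Real.exp (r * a) / Real.exp a :=
        mul_le_of_le_one_right (by positivity) (sinh_mul_div_le_one hr1 t)
end

section
/- Let α ∈ (0,1) ∪ (1,2] and p, q ∈ (0,1]. Define f_α^{[1]}(x, y) = (x^{1−α} − y^{1−α})/(x − y) for x ≠ y and f_α^{[1]}(x, x) = (1−α)x^{−α} for x, y > 0 (the first divided difference of f_α(x) = x^{1−α}). Then 0 ≤ (√(pq)/(1−α))·f_α^{[1]}(p^{1/α}, q^{1/α}) ≤ 1. -/
/-!
Write `p = exp (α s)` and `q = exp (α t)`, so that the nodes of the divided difference are `exp s`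
and `exp t`, and `√(pq) = exp (α (s + t) / 2)`. With `β = 1 - α` and `d = (s - t) / 2`, the identity
`exp (β s) - exp (β t) = 2 exp (β (s + t) / 2) sinh (β d)` makes every exponential factor cancel,
and the quantity equals `sinh (β d) / (β sinh d)` when `d ≠ 0`, and `1` when `d = 0`. Since
`0 < |β| ≤ 1`, the bounds follow from the oddness of `sinh` and its convexity on `[0, ∞)`, which
gives `sinh (β d) ≤ β sinh d` for `0 ≤ β ≤ 1` and `0 ≤ d`.
-/

noncomputable section

/-- The first divided difference of the function `f_α(x) = x^{1−α}`. -/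
def divDiff (α : ℝ) (x y : ℝ) : ℝ :=
  if x = y then (1 - α) * x ^ (-α) else (x ^ (1 - α) - y ^ (1 - α)) / (x - y)

theorem convexOn_sinh : ConvexOn ℝ (Set.Ici 0) Real.sinh := by
  refine MonotoneOn.convexOn_of_deriv (convex_Ici 0) Real.continuous_sinh.continuousOn
    Real.differentiable_sinh.differentiableOn ?_
  rw [Real.deriv_sinh]
  exact Real.cosh_strictMonoOn.monotoneOn.mono interior_subset

theorem sinh_mul_le {b d : ℝ} (hb : 0 ≤ b) (hb1 : b ≤ 1) (hd : 0 ≤ d) :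
    Real.sinh (b * d) ≤ b * Real.sinh d := by
  have h := convexOn_sinh.2 (Set.mem_Ici.2 hd) (Set.mem_Ici.2 le_rfl) hb (sub_nonneg.2 hb1)
    (by ring)
  simpa using h

theorem sinh_ratio_bounds_of_pos {b d : ℝ} (hb : 0 < b) (hb1 : b ≤ 1) (hd : 0 < d) :
    0 ≤ Real.sinh (b * d) / (b * Real.sinh d) ∧ Real.sinh (b * d) / (b * Real.sinh d) ≤ 1 := by
  have h1 : 0 < Real.sinh d := Real.sinh_pos_iff.2 hd
  have h2 : 0 < Real.sinh (b * d) := Real.sinh_pos_iff.2 (mul_pos hb hd)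
  exact ⟨by positivity, (div_le_one (by positivity)).2 (sinh_mul_le hb.le hb1 hd.le)⟩

/-- The ratio is even in `b` and in `d`, so its bounds reduce to positive arguments. -/
theorem sinh_ratio_bounds {b d : ℝ} (hb : b ≠ 0) (hb1 : |b| ≤ 1) (hd : d ≠ 0) :
    0 ≤ Real.sinh (b * d) / (b * Real.sinh d) ∧ Real.sinh (b * d) / (b * Real.sinh d) ≤ 1 := by
  have h := sinh_ratio_bounds_of_pos (abs_pos.2 hb) hb1 (abs_pos.2 hd)
  rcases abs_choice b with h1 | h1 <;> rcases abs_choice d with h2 | h2 <;>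
    simpa [h1, h2, Real.sinh_neg, neg_div_neg_eq, neg_div, div_neg] using h

theorem exp_sub_exp_eq (u v : ℝ) :
    Real.exp u - Real.exp v = 2 * Real.exp ((u + v) / 2) * Real.sinh ((u - v) / 2) := by
  have h1 : Real.exp u = Real.exp ((u + v) / 2) * Real.exp ((u - v) / 2) := by
    rw [← Real.exp_add]; ring_nf
  have h2 : Real.exp v = Real.exp ((u + v) / 2) * Real.exp (-((u - v) / 2)) := by
    rw [← Real.exp_add]; ring_nf
  rw [Real.sinh_eq, h1, h2]
  ring

/-- In exponential coordinates the weighted divided difference lies in `[0, 1]`. -/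
theorem divDiff_exp_bounds {α : ℝ} (hα : 1 - α ≠ 0) (hα1 : |1 - α| ≤ 1) (s t : ℝ) :
    0 ≤ Real.exp (α * ((s + t) / 2)) / (1 - α) * divDiff α (Real.exp s) (Real.exp t) ∧
    Real.exp (α * ((s + t) / 2)) / (1 - α) * divDiff α (Real.exp s) (Real.exp t) ≤ 1 := by
  unfold divDiff
  by_cases hst : s = t
  · subst hst
    have h : Real.exp (α * ((s + s) / 2)) / (1 - α) * ((1 - α) * Real.exp s ^ (-α)) = 1 := by
      rw [← mul_assoc, div_mul_cancel₀ _ hα, ← Real.exp_mul, ← Real.exp_add, Real.exp_eq_one_iff]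
      ring
    rw [if_pos rfl, h]
    norm_num
  · have hd : (s - t) / 2 ≠ 0 := div_ne_zero (sub_ne_zero.2 hst) two_ne_zero
    have hsinh : Real.sinh ((s - t) / 2) ≠ 0 := Real.sinh_ne_zero.2 hd
    have h : Real.exp (α * ((s + t) / 2)) / (1 - α) *
        ((Real.exp s ^ (1 - α) - Real.exp t ^ (1 - α)) / (Real.exp s - Real.exp t)) =
        Real.sinh ((1 - α) * ((s - t) / 2)) / ((1 - α) * Real.sinh ((s - t) / 2)) := by
      have h3 : Real.exp ((s + t) / 2) =
          Real.exp (α * ((s + t) / 2)) * Real.exp ((s * (1 - α) + t * (1 - α)) / 2) := by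
        rw [← Real.exp_add]; ring_nf
      rw [← Real.exp_mul, ← Real.exp_mul, exp_sub_exp_eq, exp_sub_exp_eq s t, h3,
        show (s * (1 - α) - t * (1 - α)) / 2 = (1 - α) * ((s - t) / 2) by ring]
      have e1 := Real.exp_ne_zero (α * ((s + t) / 2))
      have e2 := Real.exp_ne_zero ((s * (1 - α) + t * (1 - α)) / 2)
      generalize Real.exp (α * ((s + t) / 2)) = A at *
      generalize Real.exp ((s * (1 - α) + t * (1 - α)) / 2) = B at *
      generalize Real.sinh ((1 - α) * ((s - t) / 2)) = C at *
      generalize Real.sinh ((s - t) / 2) = D at *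
      field_simp
    rw [if_neg (fun h => hst (Real.exp_injective h)), h]
    exact sinh_ratio_bounds hα hα1 hd

/-- For `α ∈ (0,1) ∪ (1,2]` and `p, q ∈ (0,1]`:
`0 ≤ (√(pq)/(1−α))·f_α^{[1]}(p^{1/α}, q^{1/α}) ≤ 1`. -/
theorem stmt19 (α p q : ℝ)
    (hα : α ∈ Set.Ioo (0 : ℝ) 1 ∪ Set.Ioc (1 : ℝ) 2)
    (hp : p ∈ Set.Ioc (0 : ℝ) 1) (hq : q ∈ Set.Ioc (0 : ℝ) 1) :
    0 ≤ Real.sqrt (p * q) / (1 - α) * divDiff α (p ^ (1 / α)) (q ^ (1 / α)) ∧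
    Real.sqrt (p * q) / (1 - α) * divDiff α (p ^ (1 / α)) (q ^ (1 / α)) ≤ 1 := by
  have h0 : 0 < α := by rcases hα with h | h <;> linarith [h.1]
  have h1 : 1 - α ≠ 0 := by
    rcases hα with h | h
    · exact (sub_pos.2 h.2).ne'
    · exact (sub_neg.2 h.1).ne
  have h2 : |1 - α| ≤ 1 := by
    rw [abs_le]
    rcases hα with h | h <;> constructor <;> linarith [h.1, h.2]
  have hsqrt : Real.sqrt (p * q) =
      Real.exp (α * ((Real.log p * (1 / α) + Real.log q * (1 / α)) / 2)) := by
    rw [show α * ((Real.log p * (1 / α) + Real.log q * (1 / α)) / 2) =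
      (Real.log p + Real.log q) / 2 by field_simp, Real.exp_half, Real.exp_add,
      Real.exp_log hp.1, Real.exp_log hq.1]
  rw [hsqrt, Real.rpow_def_of_pos hp.1, Real.rpow_def_of_pos hq.1]
  exact divDiff_exp_bounds h1 h2 _ _
end
end
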